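/- Commutation of negative and positive whitening: let Γ, Γ⁻, Γ⁺ be environments and L, L⁻, L⁺ linear types with (Γ⁻,L⁻) ⊑^−_1 (Γ,L) and (Γ⁺,L⁺) ⊑^+_1 (Γ,L). Then there exist Γ*, L* such that (Γ*,L*) ⊑^+_1 (Γ⁻,L⁻) and (Γ*,L*) ⊑^−_1 (Γ⁺,L⁺). -/

import Mathlib

/-!
Positive whitening only recolours arrows in positive position, while negative whitening only
recolours arrows in negative position. The two sets of occurrences are disjoint, so both
whitenings can be performed independently, at unchanged cost. Hence the diamond closes for
arbitrary costs, by structural induction on the common larger type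
(`exists_whiterL_whiterL`, `exists_whiterM_whiterM`), then pointwise on environments
(`exists_whiterE_whiterE`). The theorem is the instance where both total costs are `1`.
-/


set_option autoImplicit false

abbrev Var := ℕ

/-- Colors: white (○) and black (●). -/
inductive Color where
  | white
  | black
deriving DecidableEq

/-- The opposite color. -/
def Color.flip : Color → Color
  | .white => .black
  | .black => .white

/-- Checkers terms (considered modulo α-conversion). -/
inductive Tm where
  | var : Var → Tm
  | lam : Color → Var → Tm → Tm
  | app : Color → Tm → Tm → Tm

/-- Substitution t{u/x} (capture avoided by the modulo-α convention). -/
def Tm.subst (x : Var) (u : Tm) : Tm → Tm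
  | .var y => if y = x then u else .var y
  | .lam c y t => if y = x then .lam c y t else .lam c y (Tm.subst x u t)
  | .app c t s => .app c (Tm.subst x u t) (Tm.subst x u s)

/-- Silent root step: (λ_c x. t) ·_c u ↦τ t{u/x}. -/
inductive RootSilent : Tm → Tm → Prop where
  | mk (c : Color) (x : Var) (t u : Tm) :
      RootSilent (.app c (.lam c x t) u) (Tm.subst x u t)

/-- Interaction root step: (λ_c x. t) ·_{c⊥} u ↦ι t{u/x}. -/
inductive RootInter : Tm → Tm → Prop where
  | mk (c : Color) (x : Var) (t u : Tm) :
      RootInter (.app c.flip (.lam c x t) u) (Tm.subst x u t)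

/-- Closure of a relation under applicative contexts ⟨·⟩ ·_{d₁} t₁ ⋯ ·_{dₘ} tₘ. -/
inductive AppClos (R : Tm → Tm → Prop) : Tm → Tm → Prop where
  | root {t u : Tm} : R t u → AppClos R t u
  | app {t u : Tm} (c : Color) (s : Tm) : AppClos R t u → AppClos R (.app c t s) (.app c u s)

/-- Closure of a relation under head contexts λ_{c₁}x₁…λ_{cₙ}xₙ.⟨·⟩ ·_{d₁} t₁ ⋯ ·_{dₘ} tₘ. -/
inductive HeadClos (R : Tm → Tm → Prop) : Tm → Tm → Prop where
  | base {t u : Tm} : AppClos R t u → HeadClos R t u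
  | lam {t u : Tm} (c : Color) (x : Var) : HeadClos R t u → HeadClos R (.lam c x t) (.lam c x u)

/-- Silent head step →hτ. -/
def HStepSilent : Tm → Tm → Prop := HeadClos RootSilent
/-- Interaction head step →hι. -/
def HStepInter : Tm → Tm → Prop := HeadClos RootInter
/-- Checkers head step →hch = →hτ ∪ →hι. -/
def HStep (t u : Tm) : Prop := HStepSilent t u ∨ HStepInter t u

/-- t ⇓ι^k : the head-reduction sequence from t reaches a →hch-normal form
and contains exactly k interaction steps. -/
inductive Evals : Tm → ℕ → Prop where
  | nf {t : Tm} : (∀ u, ¬ HStep t u) → Evals t 0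
  | silent {t u : Tm} {k : ℕ} : HStepSilent t u → Evals u k → Evals t k
  | inter {t u : Tm} {k : ℕ} : HStepInter t u → Evals u k → Evals t (k + 1)

/-- Linear types: atoms and colored arrows M →_c L (multi types as lists). -/
inductive LinTy where
  | atom : ℕ → LinTy
  | arr : List LinTy → Color → LinTy → LinTy

/-- Multi types: finite multisets [L₁,…,Lₙ] of linear types (represented as lists). -/
abbrev MTy := List LinTy

/-- Either a linear type or a multi type. -/
inductive GTy where
  | lin : LinTy → GTy
  | multi : MTy → GTy

/-- Type environments. -/
abbrev Env := Var → MTy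

/-- Pointwise (multiset) union Γ ⊎ Δ of environments. -/
def Env.union (Γ Δ : Env) : Env := fun x => Γ x ++ Δ x
/-- The empty environment. -/
def Env.empty : Env := fun _ => []
/-- The environment x : M. -/
def Env.single (x : Var) (M : MTy) : Env := fun y => if y = x then M else []
/-- Environment update: (Γ, x:M) when Γ x is empty. -/
def Env.update (Γ : Env) (x : Var) (M : MTy) : Env := fun y => if y = x then M else Γ y

/-- Dual Kronecker delta δ̄(c,d): 0 if the colors agree, 1 otherwise. -/
def costOf (c d : Color) : ℕ := if c = d then 0 else 1

/-- Typing judgments Γ ⊢ₖ t : T of the checkers multi type system,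
additionally indexed by the applicative size (number of @ rules) of the derivation. -/
inductive Ty : Env → ℕ → Tm → GTy → ℕ → Prop where
  | ax (x : Var) (L : LinTy) :
      Ty (Env.single x [L]) 0 (.var x) (.lin L) 0
  | many_nil (t : Tm) :
      Ty Env.empty 0 t (.multi []) 0
  | many_cons {Γ Δ : Env} {k k' : ℕ} {t : Tm} {L : LinTy} {M : MTy} {s s' : ℕ} :
      Ty Γ k t (.lin L) s → Ty Δ k' t (.multi M) s' →
      Ty (Env.union Γ Δ) (k + k') t (.multi (L :: M)) (s + s')
  | lam {Γ : Env} {k : ℕ} {t : Tm} {L : LinTy} {s : ℕ} (c : Color) (x : Var) :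
      Ty Γ k t (.lin L) s →
      Ty (Env.update Γ x []) k (.lam c x t) (.lin (.arr (Γ x) c L)) s
  | app {Γ Δ : Env} {k₁ k₂ : ℕ} {t u : Tm} {M : MTy} {c : Color} {L : LinTy} {s₁ s₂ : ℕ}
      (d : Color) :
      Ty Γ k₁ t (.lin (.arr M c L)) s₁ → Ty Δ k₂ u (.multi M) s₂ →
      Ty (Env.union Γ Δ) (k₁ + k₂ + costOf c d) (.app d t u) (.lin L) (s₁ + s₂ + 1)

/-- Γ ⊢ₖ t : T is derivable (for some derivation/size). -/
def HasTy (Γ : Env) (k : ℕ) (t : Tm) (T : GTy) : Prop := ∃ s, Ty Γ k t T s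

/-- Polarities. -/
inductive Pol where
  | pos
  | neg
deriving DecidableEq

/-- The opposite polarity. -/
def Pol.flip : Pol → Pol
  | .pos => .neg
  | .neg => .pos

mutual
  /-- Polarized whitening on linear types: `WhiterL p k L' L` means L' ⊑^p_k L. -/
  inductive WhiterL : Pol → ℕ → LinTy → LinTy → Prop where
    | atom (p : Pol) (a : ℕ) : WhiterL p 0 (.atom a) (.atom a)
    | whiten {k₁ k₂ : ℕ} {M' M : List LinTy} {L' L : LinTy} :
        WhiterM .neg k₁ M' M → WhiterL .pos k₂ L' L →
        WhiterL .pos (k₁ + k₂ + 1) (.arr M' .white L') (.arr M .black L)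
    | congr {p : Pol} {k₁ k₂ : ℕ} {M' M : List LinTy} {L' L : LinTy} (c : Color) :
        WhiterM p.flip k₁ M' M → WhiterL p k₂ L' L →
        WhiterL p (k₁ + k₂) (.arr M' c L') (.arr M c L)

  /-- Polarized whitening on multi types (componentwise, summing the costs). -/
  inductive WhiterM : Pol → ℕ → List LinTy → List LinTy → Prop where
    | nil (p : Pol) : WhiterM p 0 [] []
    | cons {p : Pol} {k k' : ℕ} {L' L : LinTy} {M' M : List LinTy} :
        WhiterL p k L' L → WhiterM p k' M' M →
        WhiterM p (k + k') (L' :: M') (L :: M)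
end

/-- Polarized whitening on environments (pointwise, with finitely many nonzero costs). -/
def WhiterE (p : Pol) (k : ℕ) (Γ' Γ : Env) : Prop :=
  ∃ f : Var →₀ ℕ, (∀ x, WhiterM p (f x) (Γ' x) (Γ x)) ∧ k = f.sum fun _ n => n

/-- Polarized whitening on pairs: (Γ',L') ⊑^p_k (Γ,L) iff Γ' ⊑^{p°}_{k₁} Γ and L' ⊑^p_{k₂} L
with k = k₁ + k₂. -/
def WhiterP (p : Pol) (k : ℕ) (Γ' : Env) (L' : LinTy) (Γ : Env) (L : LinTy) : Prop :=
  ∃ k₁ k₂, k = k₁ + k₂ ∧ WhiterE p.flip k₁ Γ' Γ ∧ WhiterL p k₂ L' L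

/-- Ordinary λ-terms. -/
inductive LTm where
  | var : Var → LTm
  | lam : Var → LTm → LTm
  | app : LTm → LTm → LTm

/-- Substitution on λ-terms. -/
def LTm.subst (x : Var) (u : LTm) : LTm → LTm
  | .var y => if y = x then u else .var y
  | .lam y t => if y = x then .lam y t else .lam y (LTm.subst x u t)
  | .app t s => .app (LTm.subst x u t) (LTm.subst x u s)

/-- Root β-step. -/
inductive LRoot : LTm → LTm → Prop where
  | mk (x : Var) (t u : LTm) : LRoot (.app (.lam x t) u) (LTm.subst x u t)

inductive LAppClos (R : LTm → LTm → Prop) : LTm → LTm → Prop where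
  | root {t u : LTm} : R t u → LAppClos R t u
  | app {t u : LTm} (s : LTm) : LAppClos R t u → LAppClos R (.app t s) (.app u s)

inductive LHeadClos (R : LTm → LTm → Prop) : LTm → LTm → Prop where
  | base {t u : LTm} : LAppClos R t u → LHeadClos R t u
  | lam {t u : LTm} (x : Var) : LHeadClos R t u → LHeadClos R (.lam x t) (.lam x u)

/-- Head β-reduction step on λ-terms. -/
def LHStep : LTm → LTm → Prop := LHeadClos LRoot
/-- Head normal forms. -/
def LIsHnf (t : LTm) : Prop := ∀ u, ¬ LHStep t u
/-- Many-step head reduction. -/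
def HeadReduces (t h : LTm) : Prop := Relation.ReflTransGen LHStep t h
/-- t has a head normal form. -/
def HasHnf (t : LTm) : Prop := ∃ h, HeadReduces t h ∧ LIsHnf h

/-- λx₁…xₙ.t -/
def lams : List Var → LTm → LTm
  | [], t => t
  | x :: xs, t => .lam x (lams xs t)

/-- t u₁ ⋯ uₖ -/
def apps : LTm → List LTm → LTm
  | t, [] => t
  | t, u :: us => apps (.app t u) us

/-- x occurs free in t. -/
def LFree (x : Var) : LTm → Prop
  | .var y => y = x
  | .lam y t => y ≠ x ∧ LFree x t
  | .app t u => LFree x t ∨ LFree x u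

/-- The (Hη_red) clause: t head-reduces to λx₁…x_{n+p}. y t₁…t_{k+p},
u head-reduces to λx₁…xₙ. y u₁…u_k, with R tᵢ uᵢ (i ≤ k), R t_{k+i} x_{n+i},
and the extra abstracted variables fresh for y u₁…u_k. -/
def HEtaL (R : LTm → LTm → Prop) (t u : LTm) : Prop :=
  ∃ (xs zs : List Var) (y : Var) (ts ts' us : List LTm),
    HeadReduces t (lams (xs ++ zs) (apps (.var y) (ts ++ ts'))) ∧
    HeadReduces u (lams xs (apps (.var y) us)) ∧
    List.Forall₂ R ts us ∧
    List.Forall₂ (fun a z => R a (.var z)) ts' zs ∧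
    (∀ z ∈ zs, ¬ LFree z (apps (.var y) us))

/-- The clause symmetric to (Hη_red), allowing η-expansions on the u side. -/
def HEtaR (R : LTm → LTm → Prop) (t u : LTm) : Prop :=
  ∃ (xs zs : List Var) (y : Var) (ts us us' : List LTm),
    HeadReduces t (lams xs (apps (.var y) ts)) ∧
    HeadReduces u (lams (xs ++ zs) (apps (.var y) (us ++ us'))) ∧
    List.Forall₂ R ts us ∧
    List.Forall₂ (fun z a => R (.var z) a) zs us' ∧
    (∀ z ∈ zs, ¬ LFree z (apps (.var y) ts))

/-- The Böhm preorder up to η-reductions ⊑η↓: the largest relation closed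
under (bot) and (Hη_red), defined as a greatest fixed point. -/
def EtaRedLe (t u : LTm) : Prop :=
  ∃ R : LTm → LTm → Prop,
    (∀ a b, R a b → (¬ HasHnf a) ∨ HEtaL R a b) ∧ R t u

/-- The Böhm preorder up to possibly infinite η-conversion ⊑Bη: the largest
relation closed under (bot), (Hη_red) and its symmetric clause. -/
def BohmEtaLe (t u : LTm) : Prop :=
  ∃ R : LTm → LTm → Prop,
    (∀ a b, R a b → (¬ HasHnf a) ∨ HEtaL R a b ∨ HEtaR R a b) ∧ R t u

/-- The c-painting of an ordinary λ-term. -/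
def paint (c : Color) : LTm → Tm
  | .var x => .var x
  | .lam x t => .lam c x (paint c t)
  | .app t u => .app c (paint c t) (paint c u)

/-- λ-calculus contexts. -/
inductive LCtx where
  | hole : LCtx
  | lam : Var → LCtx → LCtx
  | appL : LCtx → LTm → LCtx
  | appR : LTm → LCtx → LCtx

/-- Paint a λ-calculus context with color c (hole unchanged) and fill its hole
with a checkers term. -/
def LCtx.paintFill (c : Color) : LCtx → Tm → Tm
  | .hole, s => s
  | .lam x C, s => .lam c x (C.paintFill c s)
  | .appL C u, s => .app c (C.paintFill c s) (paint c u)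
  | .appR t C, s => .app c (paint c t) (C.paintFill c s)

/-- Checkers contexts. -/
inductive Ctx where
  | hole : Ctx
  | lam : Color → Var → Ctx → Ctx
  | appL : Color → Ctx → Tm → Ctx
  | appR : Color → Tm → Ctx → Ctx

/-- Filling the hole of a checkers context (possibly capturing free variables). -/
def Ctx.fill : Ctx → Tm → Tm
  | .hole, s => s
  | .lam c x C, s => .lam c x (C.fill s)
  | .appL c C u, s => .app c (C.fill s) u
  | .appR c t C, s => .app c t (C.fill s)

/-- Interaction improvement ⊑imp on checkers terms. -/
def Imp (t u : Tm) : Prop :=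
  ∀ (C : Ctx) (k : ℕ), Evals (C.fill t) k → ∃ k' ≤ k, Evals (C.fill u) k'

/-- Polarized whiter-cheaper improvement ⊑pwc on checkers terms. -/
def PWC (t u : Tm) : Prop :=
  ∀ (Γ : Env) (L : LinTy) (k : ℕ), HasTy Γ k t (.lin L) →
    ∃ (Γ' : Env) (L' : LinTy) (k' d : ℕ),
      HasTy Γ' k' u (.lin L') ∧ WhiterP .pos d Γ' L' Γ L ∧ k' + d ≤ k

mutual

/-- Diamond for linear types, with arbitrary costs. Polarity flips on the left of an arrow, so
there the two whitenings exchange their roles. -/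
theorem exists_whiterL_whiterL (L : LinTy) {k l : ℕ} {A B : LinTy}
    (hA : WhiterL .neg k A L) (hB : WhiterL .pos l B L) :
    ∃ S, WhiterL .pos l S A ∧ WhiterL .neg k S B := by
  match L with
  | .atom a =>
    cases hA
    cases hB
    exact ⟨.atom a, .atom _ a, .atom _ a⟩
  | .arr M c N =>
    -- The root of `A` keeps its colour: an arrow in positive position is not negatively whitened.
    cases hA with
    | congr _ hAM hAN =>
      cases hB with
      | whiten hBM hBN =>
        obtain ⟨S, hS₁, hS₂⟩ := exists_whiterM_whiterM M hBM hAM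
        obtain ⟨T, hT₁, hT₂⟩ := exists_whiterL_whiterL N hAN hBN
        exact ⟨.arr S .white T, .whiten hS₂ hT₁, .congr (p := .neg) _ hS₁ hT₂⟩
      | congr _ hBM hBN =>
        obtain ⟨S, hS₁, hS₂⟩ := exists_whiterM_whiterM M hBM hAM
        obtain ⟨T, hT₁, hT₂⟩ := exists_whiterL_whiterL N hAN hBN
        exact ⟨.arr S c T, .congr (p := .pos) _ hS₂ hT₁, .congr (p := .neg) _ hS₁ hT₂⟩

/-- Diamond for multi types, componentwise. -/
theorem exists_whiterM_whiterM (M : List LinTy) {k l : ℕ} {A B : List LinTy}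
    (hA : WhiterM .neg k A M) (hB : WhiterM .pos l B M) :
    ∃ S, WhiterM .pos l S A ∧ WhiterM .neg k S B := by
  match M with
  | [] =>
    cases hA
    cases hB
    exact ⟨[], .nil _, .nil _⟩
  | L :: M =>
    cases hA with
    | cons hAL hAM =>
      cases hB with
      | cons hBL hBM =>
        obtain ⟨S, hS₁, hS₂⟩ := exists_whiterL_whiterL L hAL hBL
        obtain ⟨T, hT₁, hT₂⟩ := exists_whiterM_whiterM M hAM hBM
        exact ⟨S :: T, .cons hS₁ hT₁, .cons hS₂ hT₂⟩

end

/-- Diamond for environments: the families of pointwise costs are preserved, hence so are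
their sums. -/
theorem exists_whiterE_whiterE {Γ A B : Env} {k l : ℕ}
    (hA : WhiterE .neg k A Γ) (hB : WhiterE .pos l B Γ) :
    ∃ S, WhiterE .pos l S A ∧ WhiterE .neg k S B := by
  obtain ⟨f, hf, hk⟩ := hA
  obtain ⟨g, hg, hl⟩ := hB
  choose S hS₁ hS₂ using fun x => exists_whiterM_whiterM (Γ x) (hf x) (hg x)
  exact ⟨S, ⟨g, hS₁, hl⟩, ⟨f, hS₂, hk⟩⟩

/-- Commutation of negative and positive whitening. -/
theorem whitening_commutation (Γ Γn Γp : Env) (L Ln Lp : LinTy)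
    (h1 : WhiterP .neg 1 Γn Ln Γ L) (h2 : WhiterP .pos 1 Γp Lp Γ L) :
    ∃ (Γs : Env) (Ls : LinTy),
      WhiterP .pos 1 Γs Ls Γn Ln ∧ WhiterP .neg 1 Γs Ls Γp Lp := by
  obtain ⟨k₁, k₂, hk, hΓn, hLn⟩ := h1
  obtain ⟨l₁, l₂, hl, hΓp, hLp⟩ := h2
  obtain ⟨Γs, hΓ₁, hΓ₂⟩ := exists_whiterE_whiterE hΓp hΓn
  obtain ⟨Ls, hL₁, hL₂⟩ := exists_whiterL_whiterL L hLn hLp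
  exact ⟨Γs, Ls, ⟨l₁, l₂, hl, hΓ₂, hL₁⟩, ⟨k₁, k₂, hk, hΓ₁, hL₂⟩⟩
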